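/- Let f be a smooth function with f ≤ 0 on a Riemannian manifold and w = |∇f|²/(1−f)². Then Δw = 6/(1−f)⁴·|∇f|⁴ + 2/(1−f)³·(Δf)·|∇f|² + 8/(1−f)³·Hess f(∇f,∇f) + 2/(1−f)²·|Hess f|² + 2/(1−f)²·⟨∇f, ∇(Δf)⟩ + 2/(1−f)²·Ric(∇f, ∇f). -/

import Mathlib

open scoped BigOperators

/-- Partial derivative in the `i`-th coordinate direction. -/
noncomputable def pd {n : ℕ} (i : Fin n) (h : (Fin n → ℝ) → ℝ) (x : Fin n → ℝ) : ℝ :=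
  fderiv ℝ h x (Pi.single i 1)

/-- Christoffel symbols `Γ^k_{ij}` of the metric `g` (with pointwise inverse `gInv`). -/
noncomputable def christoffel {n : ℕ} (g gInv : (Fin n → ℝ) → Matrix (Fin n) (Fin n) ℝ)
    (x : Fin n → ℝ) (k i j : Fin n) : ℝ :=
  (1 / 2) * ∑ l, gInv x k l *
    (pd i (fun y => g y j l) x + pd j (fun y => g y i l) x - pd l (fun y => g y i j) x)

/-- Ricci curvature tensor `R_{ij}` in local coordinates. -/
noncomputable def ricci {n : ℕ} (g gInv : (Fin n → ℝ) → Matrix (Fin n) (Fin n) ℝ)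
    (x : Fin n → ℝ) (i j : Fin n) : ℝ :=
  (∑ k, pd k (fun y => christoffel g gInv y k i j) x)
    - (∑ k, pd j (fun y => christoffel g gInv y k k i) x)
    + (∑ k, ∑ l, christoffel g gInv x k k l * christoffel g gInv x l i j)
    - (∑ k, ∑ l, christoffel g gInv x k j l * christoffel g gInv x l k i)

/-- Hessian `f_{ij}` of a function w.r.t. the metric `g`. -/
noncomputable def hess {n : ℕ} (g gInv : (Fin n → ℝ) → Matrix (Fin n) (Fin n) ℝ)
    (h : (Fin n → ℝ) → ℝ) (x : Fin n → ℝ) (i j : Fin n) : ℝ :=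
  pd i (fun y => pd j h y) x - ∑ k, christoffel g gInv x k i j * pd k h x

/-- Laplace–Beltrami operator `Δh = g^{ij} h_{ij}`. -/
noncomputable def laplaceBeltrami {n : ℕ} (g gInv : (Fin n → ℝ) → Matrix (Fin n) (Fin n) ℝ)
    (h : (Fin n → ℝ) → ℝ) (x : Fin n → ℝ) : ℝ :=
  ∑ i, ∑ j, gInv x i j * hess g gInv h x i j

/-- Inner product of gradients `⟨∇h₁, ∇h₂⟩ = g^{ij} ∂_i h₁ ∂_j h₂`. -/
noncomputable def innerGrad {n : ℕ} (gInv : (Fin n → ℝ) → Matrix (Fin n) (Fin n) ℝ)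
    (h₁ h₂ : (Fin n → ℝ) → ℝ) (x : Fin n → ℝ) : ℝ :=
  ∑ i, ∑ j, gInv x i j * pd i h₁ x * pd j h₂ x

/-- `i`-th component of the gradient `(∇h)^i = g^{ij} ∂_j h`. -/
noncomputable def gradComp {n : ℕ} (gInv : (Fin n → ℝ) → Matrix (Fin n) (Fin n) ℝ)
    (h : (Fin n → ℝ) → ℝ) (x : Fin n → ℝ) (i : Fin n) : ℝ :=
  ∑ j, gInv x i j * pd j h x

section Helpers

variable {n : ℕ}

theorem pd_smooth {h : (Fin n → ℝ) → ℝ} (hh : ContDiff ℝ (⊤ : ℕ∞) h) (i : Fin n) :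
    ContDiff ℝ (⊤ : ℕ∞) (fun y => pd i h y) := by
  unfold pd
  have h1 : ContDiff ℝ (⊤ : ℕ∞) (fderiv ℝ h) := hh.fderiv_right (by simp)
  exact h1.clm_apply contDiff_const

theorem smooth_diff {h : (Fin n → ℝ) → ℝ} (hh : ContDiff ℝ (⊤ : ℕ∞) h) (x) :
    DifferentiableAt ℝ h x := hh.differentiable (by simp) x

theorem pd_add {a b : (Fin n → ℝ) → ℝ} (ha : ContDiff ℝ (⊤ : ℕ∞) a)
    (hb : ContDiff ℝ (⊤ : ℕ∞) b) (i : Fin n) (x) :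
    pd i (fun y => a y + b y) x = pd i a x + pd i b x := by
  unfold pd
  rw [fderiv_fun_add (smooth_diff ha x) (smooth_diff hb x)]; rfl

theorem pd_sub {a b : (Fin n → ℝ) → ℝ} (ha : ContDiff ℝ (⊤ : ℕ∞) a)
    (hb : ContDiff ℝ (⊤ : ℕ∞) b) (i : Fin n) (x) :
    pd i (fun y => a y - b y) x = pd i a x - pd i b x := by
  unfold pd
  rw [fderiv_fun_sub (smooth_diff ha x) (smooth_diff hb x)]; rfl

theorem pd_neg (a : (Fin n → ℝ) → ℝ) (i : Fin n) (x) :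
    pd i (fun y => - a y) x = - pd i a x := by
  unfold pd
  rw [fderiv_fun_neg]; rfl

theorem pd_mul {a b : (Fin n → ℝ) → ℝ} (ha : ContDiff ℝ (⊤ : ℕ∞) a)
    (hb : ContDiff ℝ (⊤ : ℕ∞) b) (i : Fin n) (x) :
    pd i (fun y => a y * b y) x = pd i a x * b x + a x * pd i b x := by
  unfold pd
  rw [fderiv_fun_mul (smooth_diff ha x) (smooth_diff hb x)]
  simp; ring

theorem pd_const_mul {b : (Fin n → ℝ) → ℝ} (c : ℝ)
    (hb : ContDiff ℝ (⊤ : ℕ∞) b) (i : Fin n) (x) :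
    pd i (fun y => c * b y) x = c * pd i b x := by
  unfold pd
  rw [fderiv_const_mul (smooth_diff hb x)]
  simp

theorem pd_sum {F : Fin n → (Fin n → ℝ) → ℝ} (hF : ∀ k, ContDiff ℝ (⊤ : ℕ∞) (F k))
    (i : Fin n) (x) :
    pd i (fun y => ∑ k, F k y) x = ∑ k, pd i (F k) x := by
  unfold pd
  rw [fderiv_fun_sum (fun k _ => smooth_diff (hF k) x)]
  simp

theorem pd_comm {h : (Fin n → ℝ) → ℝ} (hh : ContDiff ℝ (⊤ : ℕ∞) h) (i j : Fin n) (x) :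
    pd i (fun y => pd j h y) x = pd j (fun y => pd i h y) x := by
  have h1 : ContDiff ℝ (⊤ : ℕ∞) (fderiv ℝ h) := hh.fderiv_right (by simp)
  have h2 : DifferentiableAt ℝ (fderiv ℝ h) x := h1.differentiable (by simp) x
  have key : ∀ i j : Fin n, pd i (fun y => pd j h y) x
      = fderiv ℝ (fderiv ℝ h) x (Pi.single i 1) (Pi.single j 1) := by
    intro i j
    unfold pd
    rw [fderiv_clm_apply h2 (differentiableAt_const _)]
    simp
  rw [key, key]
  have hs : IsSymmSndFDerivAt ℝ h x := by
    apply ContDiffAt.isSymmSndFDerivAt (n := (⊤ : ℕ∞)) hh.contDiffAt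
    simp only [minSmoothness_of_isRCLikeNormedField]
    exact WithTop.coe_le_coe.2 (le_top : (2 : ℕ∞) ≤ ⊤)
  exact hs _ _

variable (g gInv : (Fin n → ℝ) → Matrix (Fin n) (Fin n) ℝ)

theorem gInv_symm (hsymm : ∀ x, (g x).IsSymm) (hinv : ∀ x, g x * gInv x = 1) (x) :
    (gInv x).IsSymm := by
  have : gInv x = (g x)⁻¹ := (Matrix.inv_eq_right_inv (hinv x)).symm
  rw [this, Matrix.IsSymm, Matrix.transpose_nonsing_inv, (hsymm x).eq]

theorem christoffel_symm (hsymm : ∀ x, (g x).IsSymm) (x) (k i j : Fin n) :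
    christoffel g gInv x k i j = christoffel g gInv x k j i := by
  unfold christoffel
  congr 1
  refine Finset.sum_congr rfl fun l _ => ?_
  have : (fun y => g y i j) = fun y => g y j i := by
    funext y; exact (hsymm y).apply j i
  rw [this]; ring

theorem christoffel_smooth
    (hg : ∀ i j, ContDiff ℝ (⊤ : ℕ∞) (fun x => g x i j))
    (hgInv : ∀ i j, ContDiff ℝ (⊤ : ℕ∞) (fun x => gInv x i j)) (k i j : Fin n) :
    ContDiff ℝ (⊤ : ℕ∞) (fun x => christoffel g gInv x k i j) := by
  unfold christoffel
  refine contDiff_const.mul (ContDiff.sum fun l _ => (hgInv k l).mul ?_)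
  exact ((pd_smooth (hg _ _) _).add (pd_smooth (hg _ _) _)).sub (pd_smooth (hg _ _) _)

theorem hess_smooth
    (hg : ∀ i j, ContDiff ℝ (⊤ : ℕ∞) (fun x => g x i j))
    (hgInv : ∀ i j, ContDiff ℝ (⊤ : ℕ∞) (fun x => gInv x i j))
    {f : (Fin n → ℝ) → ℝ} (hf : ContDiff ℝ (⊤ : ℕ∞) f) (i j : Fin n) :
    ContDiff ℝ (⊤ : ℕ∞) (fun x => hess g gInv f x i j) := by
  unfold hess
  refine (pd_smooth (pd_smooth hf j) i).sub (ContDiff.sum fun k _ => ?_)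
  exact (christoffel_smooth g gInv hg hgInv _ _ _).mul (pd_smooth hf _)

theorem hess_symm (hsymm : ∀ x, (g x).IsSymm)
    {f : (Fin n → ℝ) → ℝ} (hf : ContDiff ℝ (⊤ : ℕ∞) f) (x) (i j : Fin n) :
    hess g gInv f x i j = hess g gInv f x j i := by
  unfold hess
  rw [pd_comm hf]
  simp_rw [christoffel_symm g gInv hsymm x _ i j]

/-- lowering an index of the Christoffel symbol -/
theorem lower_christoffel (hinv : ∀ x, g x * gInv x = 1) (x) (m i j : Fin n) :
    ∑ k, g x m k * christoffel g gInv x k i j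
      = (1 / 2) * (pd i (fun y => g y j m) x + pd j (fun y => g y i m) x
        - pd m (fun y => g y i j) x) := by
  unfold christoffel
  have h : ∀ l, ∑ k, g x m k * gInv x k l = if m = l then 1 else 0 := by
    intro l
    have := congrFun (congrFun (hinv x) m) l
    rwa [Matrix.mul_apply, Matrix.one_apply] at this
  simp_rw [Finset.mul_sum]
  rw [Finset.sum_comm]
  have : ∀ l, ∑ k, g x m k * (1 / 2 * (gInv x k l *
      (pd i (fun y => g y j l) x + pd j (fun y => g y i l) x - pd l (fun y => g y i j) x)))
      = (∑ k, g x m k * gInv x k l) * (1 / 2 *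
      (pd i (fun y => g y j l) x + pd j (fun y => g y i l) x - pd l (fun y => g y i j) x)) := by
    intro l
    rw [Finset.sum_mul]
    exact Finset.sum_congr rfl fun k _ => by ring
  simp_rw [this, h]
  simp

/-- metric compatibility -/
theorem pd_g (hsymm : ∀ x, (g x).IsSymm) (hinv : ∀ x, g x * gInv x = 1) (x) (a i j : Fin n) :
    pd a (fun y => g y i j) x = ∑ k, g x i k * christoffel g gInv x k a j
      + ∑ k, g x j k * christoffel g gInv x k a i := by
  rw [lower_christoffel g gInv hinv, lower_christoffel g gInv hinv]
  have e : ∀ p q, (fun y => g y p q) = fun y => g y q p := by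
    intro p q; funext y; exact (hsymm y).apply q p
  rw [e j i, e a i, e a j]; ring

theorem pd_gInv (hsymm : ∀ x, (g x).IsSymm) (hinv : ∀ x, g x * gInv x = 1)
    (hg : ∀ i j, ContDiff ℝ (⊤ : ℕ∞) (fun x => g x i j))
    (hgInv : ∀ i j, ContDiff ℝ (⊤ : ℕ∞) (fun x => gInv x i j)) (x) (a i j : Fin n) :
    pd a (fun y => gInv y i j) x = - (∑ l, christoffel g gInv x i a l * gInv x l j
      + ∑ l, gInv x i l * christoffel g gInv x j a l) := by
  let C : Matrix (Fin n) (Fin n) ℝ := Matrix.of fun k l => christoffel g gInv x k a l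
  let dg : Matrix (Fin n) (Fin n) ℝ := Matrix.of fun i j => pd a (fun y => g y i j) x
  let dG : Matrix (Fin n) (Fin n) ℝ := Matrix.of fun i j => pd a (fun y => gInv y i j) x
  have h1 : dg = g x * C + C.transpose * g x := by
    ext p q
    simp only [dg, C, Matrix.of_apply, Matrix.add_apply, Matrix.mul_apply, Matrix.transpose_apply]
    rw [pd_g g gInv hsymm hinv]
    congr 1
    refine Finset.sum_congr rfl fun k _ => ?_
    rw [mul_comm, (hsymm x).apply k q]
  have h2 : dg * gInv x + g x * dG = 0 := by
    ext p q
    simp only [dg, dG, Matrix.of_apply, Matrix.add_apply, Matrix.mul_apply, Matrix.zero_apply]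
    have hc : (fun y => ∑ k, g y p k * gInv y k q)
        = fun _ => (1 : Matrix (Fin n) (Fin n) ℝ) p q := by
      funext y
      rw [← hinv y, Matrix.mul_apply]
    have h3 : pd a (fun y => ∑ k, g y p k * gInv y k q) x
        = pd a (fun _ => (1 : Matrix (Fin n) (Fin n) ℝ) p q) x := by rw [hc]
    rw [pd_sum (fun k => (hg p k).mul (hgInv k q))] at h3
    rw [Finset.sum_congr rfl (fun k _ => pd_mul (hg p k) (hgInv k q) a x),
      Finset.sum_add_distrib] at h3
    rw [h3]
    simp [pd]
  have hinv' : gInv x * g x = 1 := mul_eq_one_comm.mp (hinv x)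
  have h4 : dG = -(C * gInv x + gInv x * C.transpose) := by
    have h5 : gInv x * (dg * gInv x + g x * dG) = 0 := by rw [h2, mul_zero]
    rw [h1] at h5
    have h6 : gInv x * ((g x * C + C.transpose * g x) * gInv x + g x * dG)
        = (gInv x * g x) * C * gInv x + gInv x * C.transpose * (g x * gInv x)
          + (gInv x * g x) * dG := by noncomm_ring
    rw [h6, hinv', hinv x, one_mul, mul_one, one_mul] at h5
    exact eq_neg_of_add_eq_zero_right h5
  have := congrFun (congrFun h4 i) j
  simpa [dG, C, Matrix.mul_apply] using this

/-- curvature tensor `R^k_{aib}` -/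
noncomputable def riem (x : Fin n → ℝ) (k a i b : Fin n) : ℝ :=
  pd i (fun y => christoffel g gInv y k b a) x - pd b (fun y => christoffel g gInv y k i a) x
    + ∑ l, christoffel g gInv x k i l * christoffel g gInv x l b a
    - ∑ l, christoffel g gInv x k b l * christoffel g gInv x l i a

theorem riem_antisymm (hsymm : ∀ x, (g x).IsSymm) (hinv : ∀ x, g x * gInv x = 1)
    (hg : ∀ i j, ContDiff ℝ (⊤ : ℕ∞) (fun x => g x i j))
    (hgInv : ∀ i j, ContDiff ℝ (⊤ : ℕ∞) (fun x => gInv x i j)) (x) (p q c d : Fin n) :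
    ∑ a, riem g gInv x p a c d * gInv x a q + ∑ a, gInv x p a * riem g gInv x q a c d = 0 := by
  let C : Fin n → Matrix (Fin n) (Fin n) ℝ :=
    fun a => Matrix.of fun k l => christoffel g gInv x k a l
  let dC : Fin n → Fin n → Matrix (Fin n) (Fin n) ℝ :=
    fun e a => Matrix.of fun k l => pd e (fun y => christoffel g gInv y k a l) x
  let dG : Fin n → Matrix (Fin n) (Fin n) ℝ :=
    fun a => Matrix.of fun i j => pd a (fun y => gInv y i j) x
  let ddG : Fin n → Fin n → Matrix (Fin n) (Fin n) ℝ :=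
    fun e a => Matrix.of fun i j => pd e (fun z => pd a (fun y => gInv y i j) z) x
  have hC := christoffel_smooth g gInv hg hgInv
  have h1 : ∀ a, dG a = -(C a * gInv x + gInv x * (C a).transpose) := by
    intro a; ext i j
    simp only [dG, C, Matrix.of_apply, Matrix.neg_apply, Matrix.add_apply, Matrix.mul_apply,
      Matrix.transpose_apply]
    exact pd_gInv g gInv hsymm hinv hg hgInv x a i j
  have h2 : ∀ e a, ddG e a = -(dC e a * gInv x + C a * dG e + (dG e * (C a).transpose
      + gInv x * (dC e a).transpose)) := by
    intro e a; ext i j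
    simp only [ddG, dG, C, dC, Matrix.of_apply, Matrix.neg_apply, Matrix.add_apply,
      Matrix.mul_apply, Matrix.transpose_apply]
    simp_rw [pd_gInv g gInv hsymm hinv hg hgInv _ a i j]
    rw [pd_neg, pd_add (ContDiff.sum fun l _ => (hC _ _ _).mul (hgInv _ _))
      (ContDiff.sum fun l _ => (hgInv _ _).mul (hC _ _ _)),
      pd_sum (fun l => (hC _ _ _).mul (hgInv _ _)), pd_sum (fun l => (hgInv _ _).mul (hC _ _ _))]
    simp_rw [pd_mul (hC _ _ _) (hgInv _ _), pd_mul (hgInv _ _) (hC _ _ _),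
      Finset.sum_add_distrib]
  have h3 : ddG c d = ddG d c := by
    ext i j
    simp only [ddG, Matrix.of_apply]
    exact pd_comm (hgInv i j) c d x
  let R : Matrix (Fin n) (Fin n) ℝ := dC c d - dC d c + C c * C d - C d * C c
  have h4 : R * gInv x + gInv x * R.transpose = 0 := by
    rw [h2, h2, h1, h1] at h3
    have h5 := sub_eq_zero.mpr h3
    simp only [R, Matrix.transpose_add, Matrix.transpose_sub, Matrix.transpose_mul]
    rw [← neg_eq_zero, ← h5]
    noncomm_ring
  have hR : ∀ k a, R k a = riem g gInv x k a c d := by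
    intro k a
    simp [R, riem, dC, C, Matrix.mul_apply]
  have := congrFun (congrFun h4 p) q
  simpa [Matrix.mul_apply, hR] using this

theorem riem_ricci (hsymm : ∀ x, (g x).IsSymm) (x) (i j : Fin n) :
    ∑ k, riem g gInv x k i k j = ricci g gInv x i j := by
  unfold riem ricci
  simp_rw [Finset.sum_sub_distrib, Finset.sum_add_distrib, Finset.sum_sub_distrib]
  simp_rw [fun y k => christoffel_symm g gInv hsymm y k j i]

theorem pd_pd (f : (Fin n → ℝ) → ℝ) (x) (i j : Fin n) :
    pd i (fun y => pd j f y) x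
      = hess g gInv f x i j + ∑ k, christoffel g gInv x k i j * pd k f x := by
  unfold hess; ring

/-- covariant derivative of the Hessian, `∇_b f_{ij}` -/
noncomputable def dhess (f : (Fin n → ℝ) → ℝ) (x : Fin n → ℝ) (b i j : Fin n) : ℝ :=
  pd b (fun y => hess g gInv f y i j) x
    - ∑ l, christoffel g gInv x l b i * hess g gInv f x l j
    - ∑ l, christoffel g gInv x l b j * hess g gInv f x i l

theorem ricci_identity (hsymm : ∀ x, (g x).IsSymm)
    (hg : ∀ i j, ContDiff ℝ (⊤ : ℕ∞) (fun x => g x i j))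
    (hgInv : ∀ i j, ContDiff ℝ (⊤ : ℕ∞) (fun x => gInv x i j))
    {f : (Fin n → ℝ) → ℝ} (hf : ContDiff ℝ (⊤ : ℕ∞) f) (x) (b a i : Fin n) :
    dhess g gInv f x b a i = dhess g gInv f x i a b + ∑ k, pd k f x * riem g gInv x k a i b := by
  have hC := christoffel_smooth g gInv hg hgInv
  have h1 : ∀ b a i, pd b (fun y => hess g gInv f y a i) x
      = pd b (fun y => pd a (fun z => pd i f z) y) x
        - (∑ k, pd b (fun y => christoffel g gInv y k a i) x * pd k f x
          + (∑ k, christoffel g gInv x k a i * hess g gInv f x b k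
          + ∑ k, ∑ l, christoffel g gInv x k a i * (christoffel g gInv x l b k * pd l f x))) := by
    intro b a i
    unfold hess
    rw [pd_sub (pd_smooth (pd_smooth hf i) a)
      (ContDiff.sum fun k _ => (hC _ _ _).mul (pd_smooth hf _)),
      pd_sum (fun k => (hC _ _ _).mul (pd_smooth hf _))]
    simp_rw [pd_mul (hC _ _ _) (pd_smooth hf _)]
    rw [Finset.sum_add_distrib]
    simp_rw [pd_pd g gInv f x, mul_add, Finset.sum_add_distrib, Finset.mul_sum]
    simp [hess]
  have h2 : pd b (fun y => pd a (fun z => pd i f z) y) x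
      = pd i (fun y => pd a (fun z => pd b f z) y) x := by
    rw [show (fun y => pd a (fun z => pd i f z) y) = fun y => pd i (fun z => pd a f z) y from
      funext fun y => pd_comm hf a i y,
      show (fun y => pd a (fun z => pd b f z) y) = fun y => pd b (fun z => pd a f z) y from
      funext fun y => pd_comm hf a b y]
    exact pd_comm (pd_smooth hf a) b i x
  unfold dhess
  rw [h1, h1, h2]
  have hs : ∀ p q, (∑ k, ∑ l, christoffel g gInv x k a p * (christoffel g gInv x l q k * pd l f x))
      = ∑ k, pd k f x * ∑ l, christoffel g gInv x k q l * christoffel g gInv x l p a := by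
    intro p q
    rw [Finset.sum_comm]
    refine Finset.sum_congr rfl fun k _ => ?_
    rw [Finset.mul_sum]
    refine Finset.sum_congr rfl fun l _ => ?_
    rw [christoffel_symm g gInv hsymm x l a p]; ring
  have hd : ∀ p q, ∑ k, pd p (fun y => christoffel g gInv y k a q) x * pd k f x
      = ∑ k, pd k f x * pd p (fun y => christoffel g gInv y k q a) x := by
    intro p q
    refine Finset.sum_congr rfl fun k _ => ?_
    simp_rw [fun y => christoffel_symm g gInv hsymm y k a q]; ring
  have hh : ∀ p q, ∑ k, christoffel g gInv x k a p * hess g gInv f x q k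
      = ∑ k, christoffel g gInv x k p a * hess g gInv f x k q := by
    intro p q
    refine Finset.sum_congr rfl fun k _ => ?_
    rw [christoffel_symm g gInv hsymm x k a p, hess_symm g gInv hsymm hf x q k]
  have hl : ∑ l, christoffel g gInv x l b i * hess g gInv f x a l
      = ∑ l, christoffel g gInv x l i b * hess g gInv f x a l := by
    simp_rw [christoffel_symm g gInv hsymm x _ b i]
  rw [hs, hs, hd, hd, hh, hh, hl]
  unfold riem
  simp_rw [mul_sub, mul_add, mul_sub, Finset.sum_sub_distrib, Finset.sum_add_distrib,
    Finset.sum_sub_distrib]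
  ring

theorem pd_gradComp (hsymm : ∀ x, (g x).IsSymm) (hinv : ∀ x, g x * gInv x = 1)
    (hg : ∀ i j, ContDiff ℝ (⊤ : ℕ∞) (fun x => g x i j))
    (hgInv : ∀ i j, ContDiff ℝ (⊤ : ℕ∞) (fun x => gInv x i j))
    {f : (Fin n → ℝ) → ℝ} (hf : ContDiff ℝ (⊤ : ℕ∞) f) (x) (a i : Fin n) :
    pd a (fun y => gradComp gInv f y i) x
      = ∑ l, gInv x i l * hess g gInv f x a l
        - ∑ l, christoffel g gInv x i a l * gradComp gInv f x l := by
  unfold gradComp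
  rw [pd_sum (fun k => (hgInv _ _).mul (pd_smooth hf _))]
  simp_rw [pd_mul (hgInv _ _) (pd_smooth hf _), pd_gInv g gInv hsymm hinv hg hgInv x,
    pd_pd g gInv f x, mul_add, neg_mul, add_mul, neg_add, Finset.sum_add_distrib,
    Finset.sum_neg_distrib, Finset.mul_sum, Finset.sum_mul]
  have e1 : ∑ j, ∑ l, christoffel g gInv x i a l * gInv x l j * pd j f x
      = ∑ l, ∑ j, christoffel g gInv x i a l * (gInv x l j * pd j f x) := by
    rw [Finset.sum_comm]
    simp_rw [mul_assoc]
  have e2 : ∑ j, ∑ l, gInv x i l * christoffel g gInv x j a l * pd j f x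
      = ∑ l, ∑ j, gInv x i l * (christoffel g gInv x j a l * pd j f x) := by
    rw [Finset.sum_comm]
    simp_rw [mul_assoc]
  rw [e1, e2]; ring

theorem gradComp_smooth (hgInv : ∀ i j, ContDiff ℝ (⊤ : ℕ∞) (fun x => gInv x i j))
    {f : (Fin n → ℝ) → ℝ} (hf : ContDiff ℝ (⊤ : ℕ∞) f) (i : Fin n) :
    ContDiff ℝ (⊤ : ℕ∞) (fun y => gradComp gInv f y i) := by
  unfold gradComp
  exact ContDiff.sum fun k _ => (hgInv _ _).mul (pd_smooth hf _)

theorem innerGrad_smooth (hgInv : ∀ i j, ContDiff ℝ (⊤ : ℕ∞) (fun x => gInv x i j))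
    {f : (Fin n → ℝ) → ℝ} (hf : ContDiff ℝ (⊤ : ℕ∞) f) :
    ContDiff ℝ (⊤ : ℕ∞) (fun y => innerGrad gInv f f y) := by
  unfold innerGrad
  exact ContDiff.sum fun k _ => ContDiff.sum fun l _ =>
    ((hgInv _ _).mul (pd_smooth hf _)).mul (pd_smooth hf _)

theorem innerGrad_eq (hs : ∀ x, (gInv x).IsSymm) (f h : (Fin n → ℝ) → ℝ) (x) :
    innerGrad gInv f h x = ∑ i, gradComp gInv f x i * pd i h x := by
  unfold innerGrad gradComp
  rw [Finset.sum_comm]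
  refine Finset.sum_congr rfl fun j _ => ?_
  rw [Finset.sum_mul]
  refine Finset.sum_congr rfl fun i _ => ?_
  rw [(hs x).apply j i]

theorem pd_innerGrad (hsymm : ∀ x, (g x).IsSymm) (hinv : ∀ x, g x * gInv x = 1)
    (hg : ∀ i j, ContDiff ℝ (⊤ : ℕ∞) (fun x => g x i j))
    (hgInv : ∀ i j, ContDiff ℝ (⊤ : ℕ∞) (fun x => gInv x i j))
    {f : (Fin n → ℝ) → ℝ} (hf : ContDiff ℝ (⊤ : ℕ∞) f) (x) (a : Fin n) :
    pd a (fun y => innerGrad gInv f f y) x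
      = 2 * ∑ i, hess g gInv f x a i * gradComp gInv f x i := by
  have hs := gInv_symm g gInv hsymm hinv
  simp_rw [innerGrad_eq gInv hs f f]
  rw [pd_sum (fun k => (gradComp_smooth gInv hgInv hf k).mul (pd_smooth hf _))]
  simp_rw [pd_mul (gradComp_smooth gInv hgInv hf _) (pd_smooth hf _),
    pd_gradComp g gInv hsymm hinv hg hgInv hf x, pd_pd g gInv f x, mul_add, sub_mul,
    Finset.sum_add_distrib, Finset.sum_sub_distrib, Finset.mul_sum, Finset.sum_mul]
  have e1 : ∑ i, ∑ l, gInv x i l * hess g gInv f x a l * pd i f x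
      = ∑ i, gradComp gInv f x i * hess g gInv f x a i := by
    rw [Finset.sum_comm]
    refine Finset.sum_congr rfl fun i _ => ?_
    unfold gradComp
    rw [Finset.sum_mul]
    refine Finset.sum_congr rfl fun l _ => ?_
    rw [(hs x).apply i l]; ring
  have e2 : ∑ i, ∑ l, christoffel g gInv x i a l * gradComp gInv f x l * pd i f x
      = ∑ i, ∑ l, gradComp gInv f x i * (christoffel g gInv x l a i * pd l f x) := by
    rw [Finset.sum_comm]
    refine Finset.sum_congr rfl fun i _ => Finset.sum_congr rfl fun l _ => ?_
    ring
  rw [e1, e2, sub_add_add_cancel, ← Finset.sum_add_distrib]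
  refine Finset.sum_congr rfl fun i _ => ?_
  ring

theorem hess_innerGrad (hsymm : ∀ x, (g x).IsSymm) (hinv : ∀ x, g x * gInv x = 1)
    (hg : ∀ i j, ContDiff ℝ (⊤ : ℕ∞) (fun x => g x i j))
    (hgInv : ∀ i j, ContDiff ℝ (⊤ : ℕ∞) (fun x => gInv x i j))
    {f : (Fin n → ℝ) → ℝ} (hf : ContDiff ℝ (⊤ : ℕ∞) f) (x) (b a : Fin n) :
    hess g gInv (fun y => innerGrad gInv f f y) x b a
      = 2 * ∑ i, gradComp gInv f x i * dhess g gInv f x b a i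
        + 2 * ∑ i, ∑ l, gInv x i l * hess g gInv f x a i * hess g gInv f x b l := by
  have hH := hess_smooth g gInv hg hgInv hf
  have hv := gradComp_smooth gInv hgInv hf
  rw [hess]
  simp_rw [pd_innerGrad g gInv hsymm hinv hg hgInv hf]
  rw [pd_const_mul _ (ContDiff.sum fun k _ => (hH _ _).mul (hv _)),
    pd_sum (fun k => (hH _ _).mul (hv _))]
  simp_rw [pd_mul (hH _ _) (hv _), pd_gradComp g gInv hsymm hinv hg hgInv hf x]
  unfold dhess
  simp_rw [mul_sub, Finset.sum_add_distrib, Finset.sum_sub_distrib, Finset.mul_sum]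
  have e1 : ∑ i, ∑ l, hess g gInv f x a i * (christoffel g gInv x i b l * gradComp gInv f x l)
      = ∑ i, ∑ l, gradComp gInv f x i * (christoffel g gInv x l b i * hess g gInv f x a l) := by
    rw [Finset.sum_comm]
    refine Finset.sum_congr rfl fun i _ => Finset.sum_congr rfl fun l _ => ?_
    ring
  have e2 : ∑ k, ∑ i, christoffel g gInv x k b a * (2 * (hess g gInv f x k i * gradComp gInv f x i))
      = 2 * ∑ i, ∑ l, gradComp gInv f x i * (christoffel g gInv x l b a * hess g gInv f x l i) := by
    rw [Finset.sum_comm, Finset.mul_sum]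
    refine Finset.sum_congr rfl fun i _ => ?_
    rw [Finset.mul_sum]
    refine Finset.sum_congr rfl fun l _ => ?_
    ring
  have e3 : ∑ i, ∑ l, hess g gInv f x a i * (gInv x i l * hess g gInv f x b l)
      = ∑ i, ∑ l, gInv x i l * hess g gInv f x a i * hess g gInv f x b l := by
    refine Finset.sum_congr rfl fun i _ => Finset.sum_congr rfl fun l _ => ?_
    ring
  have e4 : ∑ i, pd b (fun y => hess g gInv f y a i) x * gradComp gInv f x i
      = ∑ i, gradComp gInv f x i * pd b (fun y => hess g gInv f y a i) x := by
    simp_rw [mul_comm]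
  simp_rw [← Finset.mul_sum] at e1 e2 e3 e4 ⊢
  rw [e1, e2, e3, e4]
  ring

theorem pd_laplace (hsymm : ∀ x, (g x).IsSymm) (hinv : ∀ x, g x * gInv x = 1)
    (hg : ∀ i j, ContDiff ℝ (⊤ : ℕ∞) (fun x => g x i j))
    (hgInv : ∀ i j, ContDiff ℝ (⊤ : ℕ∞) (fun x => gInv x i j))
    {f : (Fin n → ℝ) → ℝ} (hf : ContDiff ℝ (⊤ : ℕ∞) f) (x) (i : Fin n) :
    pd i (laplaceBeltrami g gInv f) x = ∑ b, ∑ a, gInv x b a * dhess g gInv f x i a b := by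
  have hH := hess_smooth g gInv hg hgInv hf
  have hs := gInv_symm g gInv hsymm hinv
  unfold laplaceBeltrami
  rw [pd_sum (fun k => ContDiff.sum fun l _ => (hgInv _ _).mul (hH _ _))]
  simp_rw [pd_sum (fun k => (hgInv _ _).mul (hH _ _)), pd_mul (hgInv _ _) (hH _ _),
    pd_gInv g gInv hsymm hinv hg hgInv x]
  unfold dhess
  simp_rw [mul_sub, neg_mul, add_mul, neg_add, Finset.sum_add_distrib, Finset.sum_sub_distrib,
    Finset.sum_neg_distrib, Finset.mul_sum, Finset.sum_mul]
  have e0 : ∑ b, ∑ a, gInv x b a * pd i (fun y => hess g gInv f y b a) x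
      = ∑ b, ∑ a, gInv x b a * pd i (fun y => hess g gInv f y a b) x := by
    simp_rw [fun y a b => hess_symm g gInv hsymm hf y a b]
  have e1 : ∑ p, ∑ q, ∑ l, christoffel g gInv x p i l * gInv x l q * hess g gInv f x p q
      = ∑ b, ∑ a, ∑ l, gInv x b a * (christoffel g gInv x l i b * hess g gInv f x a l) := by
    -- l ↦ b, q ↦ a, p ↦ l
    rw [Finset.sum_comm_cycle]
    refine Finset.sum_congr rfl fun b _ => ?_
    rw [Finset.sum_comm]
    refine Finset.sum_congr rfl fun a _ => Finset.sum_congr rfl fun l _ => ?_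
    rw [hess_symm g gInv hsymm hf x a l]; ring
  have e2 : ∑ p, ∑ q, ∑ l, gInv x p l * christoffel g gInv x q i l * hess g gInv f x p q
      = ∑ b, ∑ a, ∑ l, gInv x b a * (christoffel g gInv x l i a * hess g gInv f x l b) := by
    refine Finset.sum_congr rfl fun b _ => ?_
    rw [Finset.sum_comm]
    refine Finset.sum_congr rfl fun a _ => Finset.sum_congr rfl fun l _ => ?_
    rw [hess_symm g gInv hsymm hf x b l]; ring
  rw [e0, e1, e2]; ring

theorem curv_term (hsymm : ∀ x, (g x).IsSymm) (hinv : ∀ x, g x * gInv x = 1)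
    (hg : ∀ i j, ContDiff ℝ (⊤ : ℕ∞) (fun x => g x i j))
    (hgInv : ∀ i j, ContDiff ℝ (⊤ : ℕ∞) (fun x => gInv x i j))
    (f : (Fin n → ℝ) → ℝ) (x) (i : Fin n) :
    ∑ b, ∑ a, gInv x b a * ∑ k, pd k f x * riem g gInv x k a i b
      = ∑ j, ricci g gInv x j i * gradComp gInv f x j := by
  have hs := gInv_symm g gInv hsymm hinv
  have anti : ∀ k b, ∑ a, gInv x b a * riem g gInv x k a i b
      = ∑ a, gInv x k a * riem g gInv x b a b i := by
    intro k b
    have h := riem_antisymm g gInv hsymm hinv hg hgInv x b k i b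
    have h2 : ∀ a, riem g gInv x b a i b = - riem g gInv x b a b i := by
      intro a; unfold riem; ring
    simp_rw [h2, neg_mul, Finset.sum_neg_distrib] at h
    rw [neg_add_eq_zero] at h
    rw [← h]
    refine Finset.sum_congr rfl fun a _ => ?_
    rw [(hs x).apply k a]; ring
  have h1 : ∑ b, ∑ a, gInv x b a * ∑ k, pd k f x * riem g gInv x k a i b
      = ∑ b, ∑ k, pd k f x * ∑ a, gInv x b a * riem g gInv x k a i b := by
    refine Finset.sum_congr rfl fun b _ => ?_
    simp_rw [Finset.mul_sum]
    rw [Finset.sum_comm]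
    refine Finset.sum_congr rfl fun a _ => Finset.sum_congr rfl fun l _ => ?_
    ring
  rw [h1]
  simp_rw [anti, ← riem_ricci g gInv hsymm, gradComp, Finset.mul_sum, Finset.sum_mul]
  -- ∑ b k a, = ∑ j k b
  rw [Finset.sum_comm_cycle]
  refine Finset.sum_congr rfl fun j _ => ?_
  rw [Finset.sum_comm]
  refine Finset.sum_congr rfl fun a _ => Finset.sum_congr rfl fun l _ => ?_
  rw [(hs x).apply j a]; ring

theorem bochner (hsymm : ∀ x, (g x).IsSymm) (hinv : ∀ x, g x * gInv x = 1)
    (hg : ∀ i j, ContDiff ℝ (⊤ : ℕ∞) (fun x => g x i j))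
    (hgInv : ∀ i j, ContDiff ℝ (⊤ : ℕ∞) (fun x => gInv x i j))
    {f : (Fin n → ℝ) → ℝ} (hf : ContDiff ℝ (⊤ : ℕ∞) f) (x) :
    laplaceBeltrami g gInv (fun y => innerGrad gInv f f y) x
      = 2 * (∑ i, ∑ j, ∑ a, ∑ b, gInv x i a * gInv x j b *
            hess g gInv f x i j * hess g gInv f x a b)
        + 2 * innerGrad gInv f (laplaceBeltrami g gInv f) x
        + 2 * (∑ i, ∑ j, ricci g gInv x i j * gradComp gInv f x i * gradComp gInv f x j) := by
  have hs := gInv_symm g gInv hsymm hinv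
  rw [innerGrad_eq gInv hs]
  simp_rw [pd_laplace g gInv hsymm hinv hg hgInv hf]
  have hric : ∑ i, ∑ j, ricci g gInv x i j * gradComp gInv f x i * gradComp gInv f x j
      = ∑ i, gradComp gInv f x i *
        ∑ b, ∑ a, gInv x b a * ∑ k, pd k f x * riem g gInv x k a i b := by
    simp_rw [curv_term g gInv hsymm hinv hg hgInv f x]
    rw [Finset.sum_comm]
    refine Finset.sum_congr rfl fun i _ => ?_
    rw [Finset.mul_sum]
    refine Finset.sum_congr rfl fun l _ => ?_
    ring
  have hsum : ∑ i, gradComp gInv f x i * ∑ b, ∑ a, gInv x b a * dhess g gInv f x b a i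
      = ∑ i, gradComp gInv f x i * ∑ b, ∑ a, gInv x b a * dhess g gInv f x i a b
        + ∑ i, gradComp gInv f x i *
        ∑ b, ∑ a, gInv x b a * ∑ k, pd k f x * riem g gInv x k a i b := by
    rw [← Finset.sum_add_distrib]
    refine Finset.sum_congr rfl fun i _ => ?_
    rw [← mul_add, ← Finset.sum_add_distrib]
    congr 1
    refine Finset.sum_congr rfl fun b _ => ?_
    rw [← Finset.sum_add_distrib]
    refine Finset.sum_congr rfl fun a _ => ?_
    rw [ricci_identity g gInv hsymm hg hgInv hf x b a i, mul_add]
  rw [hric, add_assoc, ← mul_add, ← hsum]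
  unfold laplaceBeltrami
  simp_rw [hess_innerGrad g gInv hsymm hinv hg hgInv hf x, mul_add, Finset.sum_add_distrib]
  rw [add_comm]
  congr 1
  · simp_rw [Finset.mul_sum]
    -- LHS ∑ b a i l, RHS ∑ i j a b
    refine Finset.sum_congr rfl fun b _ => ?_
    have : ∀ F : Fin n → Fin n → Fin n → ℝ, ∑ a, ∑ i, ∑ l, F a i l = ∑ l, ∑ a, ∑ i, F a i l := by
      intro F
      rw [Finset.sum_comm_cycle]
    rw [this]
    refine Finset.sum_congr rfl fun l _ => Finset.sum_congr rfl fun a _ =>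
      Finset.sum_congr rfl fun i _ => ?_
    rw [(hs x).apply l i]; ring
  · simp_rw [Finset.mul_sum]
    symm
    rw [Finset.sum_comm]
    refine Finset.sum_congr rfl fun b _ => ?_
    rw [Finset.sum_comm]
    refine Finset.sum_congr rfl fun a _ => Finset.sum_congr rfl fun i _ => ?_
    ring

theorem psi_smooth {f : (Fin n → ℝ) → ℝ} (hf : ContDiff ℝ (⊤ : ℕ∞) f) (hf0 : ∀ x, f x ≤ 0)
    (k : ℕ) : ContDiff ℝ (⊤ : ℕ∞) (fun y => ((1 - f y) ^ k)⁻¹) := by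
  refine ((contDiff_const.sub hf).pow k).inv fun y => ?_
  have := hf0 y
  exact pow_ne_zero _ (by linarith)

theorem pd_psi {f : (Fin n → ℝ) → ℝ} (hf : ContDiff ℝ (⊤ : ℕ∞) f) (hf0 : ∀ x, f x ≤ 0)
    (k : ℕ) (i : Fin n) (x) :
    pd i (fun y => ((1 - f y) ^ k)⁻¹) x = k * ((1 - f x) ^ (k + 1))⁻¹ * pd i f x := by
  have h0 : 1 - f x ≠ 0 := by have := hf0 x; linarith
  have h1 : HasFDerivAt f (fderiv ℝ f x) x := (smooth_diff hf x).hasFDerivAt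
  have h2 : HasDerivAt (fun t : ℝ => ((1 - t) ^ k)⁻¹) (k * ((1 - f x) ^ (k + 1))⁻¹) (f x) := by
    have h3 : HasDerivAt (fun t : ℝ => 1 - t) (-1) (f x) := by
      simpa using (hasDerivAt_id (f x)).const_sub 1
    have h4 := (h3.pow k).inv (pow_ne_zero k h0)
    refine h4.congr_deriv ?_
    rcases k with _ | k
    · simp
    · simp only [Nat.add_sub_cancel, Pi.pow_apply]
      field_simp
      ring
  have h5 := (h2.comp_hasFDerivAt x h1).fderiv
  unfold pd
  have h6 : fderiv ℝ (fun y => ((1 - f y) ^ k)⁻¹) x = _ := h5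
  rw [h6]
  simp

end Helpers

/-- for a smooth `f ≤ 0` on a Riemannian manifold (in local
coordinates, with metric `g` and Ricci curvature `Ric`) and `w = |∇f|²/(1-f)²`,
`Δw = 6/(1-f)⁴|∇f|⁴ + 2/(1-f)³(Δf)|∇f|² + 8/(1-f)³ Hess f(∇f,∇f)
   + 2/(1-f)²|Hess f|² + 2/(1-f)²⟨∇f, ∇(Δf)⟩ + 2/(1-f)² Ric(∇f,∇f)`. -/
theorem stmt_16 {n : ℕ} (g gInv : (Fin n → ℝ) → Matrix (Fin n) (Fin n) ℝ)
    (hsymm : ∀ x, (g x).IsSymm) (hinv : ∀ x, g x * gInv x = 1)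
    (hg : ∀ i j, ContDiff ℝ (⊤ : ℕ∞) (fun x => g x i j))
    (hgInv : ∀ i j, ContDiff ℝ (⊤ : ℕ∞) (fun x => gInv x i j))
    (f : (Fin n → ℝ) → ℝ) (hf : ContDiff ℝ (⊤ : ℕ∞) f) (hf0 : ∀ x, f x ≤ 0)
    (w : (Fin n → ℝ) → ℝ)
    (hw : ∀ x, w x = innerGrad gInv f f x / (1 - f x) ^ 2) :
    ∀ x, laplaceBeltrami g gInv w x =
      6 / (1 - f x) ^ 4 * (innerGrad gInv f f x) ^ 2
      + 2 / (1 - f x) ^ 3 * laplaceBeltrami g gInv f x * innerGrad gInv f f x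
      + 8 / (1 - f x) ^ 3 *
          (∑ i, ∑ j, hess g gInv f x i j * gradComp gInv f x i * gradComp gInv f x j)
      + 2 / (1 - f x) ^ 2 *
          (∑ i, ∑ j, ∑ a, ∑ b, gInv x i a * gInv x j b *
            hess g gInv f x i j * hess g gInv f x a b)
      + 2 / (1 - f x) ^ 2 * innerGrad gInv f (laplaceBeltrami g gInv f) x
      + 2 / (1 - f x) ^ 2 *
          (∑ i, ∑ j, ricci g gInv x i j * gradComp gInv f x i * gradComp gInv f x j) := by
  intro x
  have hs := gInv_symm g gInv hsymm hinv
  have h0 : 1 - f x ≠ 0 := by have := hf0 x; linarith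
  have hU := innerGrad_smooth gInv hgInv hf
  have hP := psi_smooth hf hf0
  have hu := pd_smooth hf
  set U := fun y => innerGrad gInv f f y with hUdef
  have hw' : w = fun y => U y * ((1 - f y) ^ 2)⁻¹ := by
    funext y; rw [hw, div_eq_mul_inv]
  have h1 : ∀ i y, pd i w y = pd i U y * ((1 - f y) ^ 2)⁻¹
      + U y * (2 * (((1 - f y) ^ 3)⁻¹ * pd i f y)) := by
    intro i y
    rw [hw', pd_mul hU (hP 2), pd_psi hf hf0]
    push_cast; ring
  have h2 : ∀ i j, hess g gInv w x i j = hess g gInv U x i j * ((1 - f x) ^ 2)⁻¹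
      + 2 * ((1 - f x) ^ 3)⁻¹ * (pd i U x * pd j f x + pd j U x * pd i f x)
      + 6 * ((1 - f x) ^ 4)⁻¹ * U x * (pd i f x * pd j f x)
      + 2 * ((1 - f x) ^ 3)⁻¹ * U x * hess g gInv f x i j := by
    intro i j
    unfold hess
    simp_rw [h1]
    rw [pd_add ((pd_smooth hU j).mul (hP 2))
      (hU.mul (contDiff_const.mul ((hP 3).mul (hu j)))),
      pd_mul (pd_smooth hU j) (hP 2), pd_mul hU (contDiff_const.mul ((hP 3).mul (hu j))),
      pd_const_mul _ ((hP 3).mul (hu j)), pd_mul (hP 3) (hu j), pd_psi hf hf0, pd_psi hf hf0]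
    have e : ∑ k, christoffel g gInv x k i j * (pd k U x * ((1 - f x) ^ 2)⁻¹
        + U x * (2 * (((1 - f x) ^ 3)⁻¹ * pd k f x)))
        = (∑ k, christoffel g gInv x k i j * pd k U x) * ((1 - f x) ^ 2)⁻¹
        + (∑ k, christoffel g gInv x k i j * pd k f x) * (U x * (2 * ((1 - f x) ^ 3)⁻¹)) := by
      rw [Finset.sum_mul, Finset.sum_mul, ← Finset.sum_add_distrib]
      refine Finset.sum_congr rfl fun k _ => ?_
      ring
    rw [e]
    push_cast
    ring
  have hUf : ∑ i, ∑ j, gInv x i j * (pd i U x * pd j f x)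
      = 2 * ∑ i, ∑ j, hess g gInv f x i j * gradComp gInv f x i * gradComp gInv f x j := by
    rw [Finset.mul_sum]
    refine Finset.sum_congr rfl fun i _ => ?_
    have : ∑ j, gInv x i j * (pd i U x * pd j f x) = pd i U x * gradComp gInv f x i := by
      unfold gradComp
      rw [Finset.mul_sum]
      exact Finset.sum_congr rfl fun j _ => by ring
    rw [this, hUdef, pd_innerGrad g gInv hsymm hinv hg hgInv hf, mul_assoc, Finset.sum_mul]
    congr 1
    exact Finset.sum_congr rfl fun j _ => by ring
  have hfU : ∑ i, ∑ j, gInv x i j * (pd j U x * pd i f x)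
      = ∑ i, ∑ j, gInv x i j * (pd i U x * pd j f x) := by
    rw [Finset.sum_comm]
    refine Finset.sum_congr rfl fun i _ => Finset.sum_congr rfl fun j _ => ?_
    rw [(hs x).apply i j]
  have hff : ∑ i, ∑ j, gInv x i j * (pd i f x * pd j f x) = innerGrad gInv f f x := by
    unfold innerGrad
    simp_rw [mul_assoc]
  have hL : laplaceBeltrami g gInv w x
      = ((1 - f x) ^ 2)⁻¹ * laplaceBeltrami g gInv U x
      + 2 * ((1 - f x) ^ 3)⁻¹ * (∑ i, ∑ j, gInv x i j * (pd i U x * pd j f x)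
        + ∑ i, ∑ j, gInv x i j * (pd j U x * pd i f x))
      + 6 * ((1 - f x) ^ 4)⁻¹ * U x * (∑ i, ∑ j, gInv x i j * (pd i f x * pd j f x))
      + 2 * ((1 - f x) ^ 3)⁻¹ * U x * laplaceBeltrami g gInv f x := by
    unfold laplaceBeltrami
    simp_rw [h2, Finset.mul_sum, ← Finset.sum_add_distrib, Finset.mul_sum,
      ← Finset.sum_add_distrib]
    refine Finset.sum_congr rfl fun i _ => Finset.sum_congr rfl fun j _ => ?_
    ring
  rw [hL, hfU, hUf, hff, hUdef, bochner g gInv hsymm hinv hg hgInv hf]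
  simp only [div_eq_mul_inv]
  ring
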